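/- arXiv:2410.09930 — 2 statements merged into one kernel-verified Lean document; each statement's English description precedes it below -/
import Mathlib

section
/- The inverse Fourier transform identity: the inverse Fourier transform of ξ₁⁴/(ξ₁²+ξ₂²+ξ₃²)³ on ℝ³ equals 3(y²+z²)²/(32π (x²+y²+z²)^{5/2}) (in the sense of tempered distributions, with the appropriate normalization conventions). -/
/-!
The symbol is a superposition of Gaussians, `ξ₁⁴/|ξ|⁶ = ∫₀^∞ (t²/2) ξ₁⁴ e^{-t|ξ|²} dt`
(`symbol_eq`). For fixed `t` the inverse Fourier transform of `ξ₁⁴ e^{-t|ξ|²}` is an explicit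
Hermite-type Gaussian kernel `heatK t` (`integral_osc3`); the fourth moment in the first variable
comes from integration by parts (`oscMoment_rec`). Integrating the kernels against `(t²/2) dt`
gives three Gamma integrals, which add up to `3(y²+z²)²/(32π|x|⁵)` (`kernel_eq`).

The weak formulation follows from Fubini: for fixed `t` the transform moves from the test
function to the Gaussian (`pairing_eq`), and on both sides the `t`-integral may be exchanged with
the spatial one (`swap_symbol`, `swap_kernel`). Absolute convergence holds because in both cases
the spatial `L¹` norm is bounded for `t ≤ 1` and is `O(t^{-3/2})` for `t > 1` (`swap_of_bounds`).
-/

open MeasureTheory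

/-- Inverse Fourier transform on `ℝ³` with the convention
`(F⁻¹ φ)(x) = (2π)⁻³ ∫ e^{i x·ξ} φ(ξ) dξ`, under which the fundamental
solution of `−Δ` is `1/(4π|x|)`. -/
noncomputable def invFT (φ : (Fin 3 → ℝ) → ℂ) (x : Fin 3 → ℝ) : ℂ :=
  ((2 * Real.pi) ^ 3)⁻¹ •
    ∫ ξ : Fin 3 → ℝ,
      Complex.exp (Complex.I * ((x 0 * ξ 0 + x 1 * ξ 1 + x 2 * ξ 2 : ℝ) : ℂ)) * φ ξ

/-! ### Gaussian integrals -/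

lemma integrable_pow_osc (n : ℕ) {t : ℝ} (ht : 0 < t) (x : ℝ) :
    Integrable fun u : ℝ =>
      (u : ℂ) ^ n * (Complex.exp (Complex.I * x * u) * Complex.exp (-(t : ℂ) * u ^ 2)) := by
  have h := integrable_rpow_mul_exp_neg_mul_sq ht
    (s := n) (by have := Nat.cast_nonneg (α := ℝ) n; linarith)
  refine h.norm.mono' (by fun_prop) (ae_of_all _ fun u => ?_)
  have h1 : Complex.I * x * u = ((x * u : ℝ) : ℂ) * Complex.I := by push_cast; ring
  have h2 : -(t : ℂ) * u ^ 2 = ((-t * u ^ 2 : ℝ) : ℂ) := by push_cast; ring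
  rw [norm_mul, norm_mul, h1, h2, Complex.norm_exp_ofReal_mul_I, ← Complex.ofReal_exp,
    Complex.norm_real, norm_pow, Complex.norm_real, norm_mul, Real.rpow_natCast, norm_pow, one_mul]

/-- The oscillatory Gaussian moment `∫ uⁿ e^{ixu} e^{-tu²} du`. -/
noncomputable def oscMoment (n : ℕ) (t x : ℝ) : ℂ :=
  ∫ u : ℝ, (u : ℂ) ^ n * (Complex.exp (Complex.I * x * u) * Complex.exp (-(t : ℂ) * u ^ 2))

/-- Integration by parts: the derivative of `uⁿ⁺¹ e^{ixu - tu²}` has integral zero. -/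
lemma oscMoment_rec (n : ℕ) {t : ℝ} (ht : 0 < t) (x : ℝ) :
    2 * t * oscMoment (n + 2) t x
      = (n + 1) * oscMoment n t x + Complex.I * x * oscMoment (n + 1) t x := by
  have hi := fun k => integrable_pow_osc k ht x
  have hd : ∀ u : ℝ, HasDerivAt (fun u : ℝ => (u : ℂ) ^ (n + 1) *
      (Complex.exp (Complex.I * x * u) * Complex.exp (-(t : ℂ) * u ^ 2)))
      ((n + 1 : ℂ) * ((u : ℂ) ^ n *
        (Complex.exp (Complex.I * x * u) * Complex.exp (-(t : ℂ) * u ^ 2)))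
      + Complex.I * x * ((u : ℂ) ^ (n + 1) *
        (Complex.exp (Complex.I * x * u) * Complex.exp (-(t : ℂ) * u ^ 2)))
      - 2 * t * ((u : ℂ) ^ (n + 2) *
        (Complex.exp (Complex.I * x * u) * Complex.exp (-(t : ℂ) * u ^ 2)))) u := by
    intro u
    have h0 : HasDerivAt (fun u : ℝ => (u : ℂ)) 1 u := Complex.ofRealCLM.hasDerivAt
    have h1 := (h0.const_mul (Complex.I * x)).cexp
    have h2 := ((h0.pow 2).const_mul (-(t : ℂ))).cexp
    refine ((h0.pow (n + 1)).mul (h1.mul h2)).congr_deriv ?_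
    simp only [Pi.mul_apply, Pi.pow_apply, Nat.cast_add, Nat.cast_one, Nat.cast_ofNat]
    simp only [Nat.add_sub_cancel]
    ring
  have hA : Integrable fun u : ℝ => (n + 1 : ℂ) * ((u : ℂ) ^ n *
        (Complex.exp (Complex.I * x * u) * Complex.exp (-(t : ℂ) * u ^ 2)))
      + Complex.I * x * ((u : ℂ) ^ (n + 1) *
        (Complex.exp (Complex.I * x * u) * Complex.exp (-(t : ℂ) * u ^ 2))) :=
    ((hi n).const_mul _).add ((hi (n + 1)).const_mul _)
  have := integral_eq_zero_of_hasDerivAt_of_integrable hd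
    (hA.sub ((hi (n + 2)).const_mul _)) (hi (n + 1))
  rw [integral_sub hA ((hi (n + 2)).const_mul _), integral_add ((hi n).const_mul _) ((hi (n + 1)).const_mul _),
    integral_const_mul, integral_const_mul, integral_const_mul] at this
  exact (sub_eq_zero.1 this).symm

lemma oscMoment_one {t : ℝ} (ht : 0 < t) (x : ℝ) :
    2 * t * oscMoment 1 t x = Complex.I * x * oscMoment 0 t x := by
  have hi := fun k => integrable_pow_osc k ht x
  have hd : ∀ u : ℝ, HasDerivAt (fun u : ℝ => (u : ℂ) ^ 0 *
      (Complex.exp (Complex.I * x * u) * Complex.exp (-(t : ℂ) * u ^ 2)))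
      (Complex.I * x * ((u : ℂ) ^ 0 *
        (Complex.exp (Complex.I * x * u) * Complex.exp (-(t : ℂ) * u ^ 2)))
      - 2 * t * ((u : ℂ) ^ 1 *
        (Complex.exp (Complex.I * x * u) * Complex.exp (-(t : ℂ) * u ^ 2)))) u := by
    intro u
    have h0 : HasDerivAt (fun u : ℝ => (u : ℂ)) 1 u := Complex.ofRealCLM.hasDerivAt
    have h1 := (h0.const_mul (Complex.I * x)).cexp
    have h2 := ((h0.pow 2).const_mul (-(t : ℂ))).cexp
    simp only [pow_zero, one_mul]
    refine (h1.mul h2).congr_deriv ?_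
    simp only [Pi.pow_apply]
    push_cast
    ring
  have := integral_eq_zero_of_hasDerivAt_of_integrable hd
    (((hi 0).const_mul _).sub ((hi 1).const_mul _)) (hi 0)
  rw [integral_sub ((hi 0).const_mul _) ((hi 1).const_mul _),
    integral_const_mul, integral_const_mul] at this
  exact (sub_eq_zero.1 this).symm

lemma oscMoment_zero {t : ℝ} (ht : 0 < t) (x : ℝ) :
    oscMoment 0 t x = ((√(Real.pi / t) * Real.exp (-x ^ 2 / (4 * t)) : ℝ) : ℂ) := by
  have := fourierIntegral_gaussian (b := t) (by simpa using ht) x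
  simp only [oscMoment, pow_zero, one_mul]
  rw [this, Real.sqrt_eq_rpow, Complex.ofReal_mul, Complex.ofReal_exp,
    Complex.ofReal_cpow (by positivity)]
  push_cast
  ring_nf

lemma oscMoment_four {t : ℝ} (ht : 0 < t) (x : ℝ) :
    oscMoment 4 t x = (((3 / (4 * t ^ 2) - 3 * x ^ 2 / (4 * t ^ 3) + x ^ 4 / (16 * t ^ 4)) *
      (√(Real.pi / t) * Real.exp (-x ^ 2 / (4 * t))) : ℝ) : ℂ) := by
  have h1 := oscMoment_one ht x
  have h2 := oscMoment_rec 0 ht x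
  have h3 := oscMoment_rec 1 ht x
  have h4 := oscMoment_rec 2 ht x
  have h0 := oscMoment_zero ht x
  rw [Complex.ofReal_mul, ← h0]
  have htc : (t : ℂ) ≠ 0 := by exact_mod_cast ht.ne'
  have hI := Complex.I_sq
  norm_num at h2 h3 h4
  generalize oscMoment 0 t x = a at *
  have e1 : oscMoment 1 t x = Complex.I * x * a / (2 * t) := by
    field_simp; linear_combination h1
  have e2 : oscMoment 2 t x = (a + Complex.I * x * (Complex.I * x * a / (2 * t))) / (2 * t) := by
    rw [← e1, eq_div_iff (by simp [htc])]; linear_combination h2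
  have e3 : oscMoment 3 t x = (2 * oscMoment 1 t x + Complex.I * x * oscMoment 2 t x) / (2 * t) := by
    rw [eq_div_iff (by simp [htc])]; linear_combination h3
  have e4 : oscMoment 4 t x = (3 * oscMoment 2 t x + Complex.I * x * oscMoment 3 t x) / (2 * t) := by
    rw [eq_div_iff (by simp [htc])]; linear_combination h4
  rw [e4, e3, e2, e1]
  push_cast
  field_simp
  ring_nf
  simp only [show Complex.I ^ 4 = 1 from Complex.I_pow_four, hI]
  ring

/-- Three-dimensional Gaussian integral, with its integrability. -/
lemma gauss3 {b : ℝ} (hb : 0 < b) :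
    Integrable (fun x : Fin 3 → ℝ => Real.exp (-b * (x 0 ^ 2 + x 1 ^ 2 + x 2 ^ 2))) ∧
    ∫ x : Fin 3 → ℝ, Real.exp (-b * (x 0 ^ 2 + x 1 ^ 2 + x 2 ^ 2)) = √(Real.pi / b) ^ 3 := by
  have e : (fun x : Fin 3 → ℝ => Real.exp (-b * (x 0 ^ 2 + x 1 ^ 2 + x 2 ^ 2)))
      = fun x : Fin 3 → ℝ => ∏ i, Real.exp (-b * x i ^ 2) := by
    ext x; rw [← Real.exp_sum, Fin.sum_univ_three]; congr 1; ring
  rw [e]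
  constructor
  · exact Integrable.fintype_prod (f := fun _ u => Real.exp (-b * u ^ 2))
      fun _ => integrable_exp_neg_mul_sq hb
  · rw [integral_fintype_prod_volume_eq_prod (fun _ u => Real.exp (-b * u ^ 2))]
    simp only [integral_gaussian, Finset.prod_const, Finset.card_univ, Fintype.card_fin]

/-- The inverse Fourier transform of `ξ₁⁴ e^{-t|ξ|²}` on `ℝ³`. -/
noncomputable def heatK (t : ℝ) (x : Fin 3 → ℝ) : ℝ :=
  ((2 * Real.pi) ^ 3)⁻¹ * (√(Real.pi / t) ^ 3 *
    (3 / (4 * t ^ 2) - 3 * x 0 ^ 2 / (4 * t ^ 3) + x 0 ^ 4 / (16 * t ^ 4)) *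
    Real.exp (-(x 0 ^ 2 + x 1 ^ 2 + x 2 ^ 2) / (4 * t)))

lemma integral_osc3 {t : ℝ} (ht : 0 < t) (x : Fin 3 → ℝ) :
    ((((2 * Real.pi) ^ 3)⁻¹ : ℝ) : ℂ) * ∫ ξ : Fin 3 → ℝ,
      ((ξ 0 ^ 4 * Real.exp (-t * (ξ 0 ^ 2 + ξ 1 ^ 2 + ξ 2 ^ 2)) : ℝ) : ℂ) *
        Complex.exp (Complex.I * ((ξ 0 * x 0 + ξ 1 * x 1 + ξ 2 * x 2 : ℝ) : ℂ))
      = heatK t x := by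
  have e : (fun ξ : Fin 3 → ℝ =>
      ((ξ 0 ^ 4 * Real.exp (-t * (ξ 0 ^ 2 + ξ 1 ^ 2 + ξ 2 ^ 2)) : ℝ) : ℂ) *
        Complex.exp (Complex.I * ((ξ 0 * x 0 + ξ 1 * x 1 + ξ 2 * x 2 : ℝ) : ℂ)))
      = fun ξ => ∏ i : Fin 3, (fun (i : Fin 3) (u : ℝ) => (u : ℂ) ^ (![4, 0, 0] i : ℕ) *
        (Complex.exp (Complex.I * x i * u) * Complex.exp (-(t : ℂ) * u ^ 2))) i (ξ i) := by
    ext ξ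
    have h : Complex.exp (Complex.I * ((ξ 0 * x 0 + ξ 1 * x 1 + ξ 2 * x 2 : ℝ) : ℂ))
        = Complex.exp (Complex.I * x 0 * ξ 0) * Complex.exp (Complex.I * x 1 * ξ 1) *
          Complex.exp (Complex.I * x 2 * ξ 2) := by
      rw [← Complex.exp_add, ← Complex.exp_add]; congr 1; push_cast; ring
    have h' : Complex.exp (-(t : ℂ) * (ξ 0 ^ 2 + ξ 1 ^ 2 + ξ 2 ^ 2))
        = Complex.exp (-(t : ℂ) * ξ 0 ^ 2) * Complex.exp (-(t : ℂ) * ξ 1 ^ 2) *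
          Complex.exp (-(t : ℂ) * ξ 2 ^ 2) := by
      rw [← Complex.exp_add, ← Complex.exp_add]; congr 1; ring
    rw [Fin.prod_univ_three, h]
    push_cast
    rw [h']
    simp
    ring
  rw [e, integral_fintype_prod_volume_eq_prod (fun (i : Fin 3) (u : ℝ) =>
    (u : ℂ) ^ (![4, 0, 0] i : ℕ) *
      (Complex.exp (Complex.I * x i * u) * Complex.exp (-(t : ℂ) * u ^ 2))), Fin.prod_univ_three]
  change _ * (oscMoment 4 t (x 0) * oscMoment 0 t (x 1) * oscMoment 0 t (x 2)) = _
  rw [oscMoment_four ht, oscMoment_zero ht, oscMoment_zero ht, heatK, ← Complex.ofReal_mul,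
    ← Complex.ofReal_mul, ← Complex.ofReal_mul]
  congr 1
  have : Real.exp (-(x 0 ^ 2 + x 1 ^ 2 + x 2 ^ 2) / (4 * t)) = Real.exp (-x 0 ^ 2 / (4 * t)) *
      Real.exp (-x 1 ^ 2 / (4 * t)) * Real.exp (-x 2 ^ 2 / (4 * t)) := by
    rw [← Real.exp_add, ← Real.exp_add]; congr 1; ring
  rw [this]
  ring

/-! ### Reduction of the test function and a Fubini criterion -/

open scoped FourierTransform in
/-- `invFT φ` is again a Schwartz function: it is a rescaling of Mathlib's inverse Fourier
transform on Euclidean space. -/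
lemma exists_schwartz_invFT (φ : SchwartzMap (Fin 3 → ℝ) ℂ) :
    ∃ ψ : SchwartzMap (Fin 3 → ℝ) ℂ, ∀ ξ, invFT (fun v => φ v) ξ = ψ ξ := by
  let e : EuclideanSpace ℝ (Fin 3) ≃L[ℝ] (Fin 3 → ℝ) := EuclideanSpace.equiv (Fin 3) ℝ
  have hpi : (2 * Real.pi) ≠ 0 := by positivity
  let s : (Fin 3 → ℝ) ≃L[ℝ] (Fin 3 → ℝ) :=
    ContinuousLinearEquiv.smulLeft (Units.mk0 (2 * Real.pi)⁻¹ (inv_ne_zero hpi))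
  let φ' := SchwartzMap.compCLMOfContinuousLinearEquiv ℂ e φ
  refine ⟨((2 * Real.pi) ^ 3)⁻¹ •
    SchwartzMap.compCLMOfContinuousLinearEquiv ℂ (s.trans e.symm) (𝓕⁻ φ'), fun ξ => ?_⟩
  simp only [invFT, smul_apply, SchwartzMap.compCLMOfContinuousLinearEquiv_apply,
    Function.comp_apply, SchwartzMap.fourierInv_coe, Real.fourierInv_eq']
  congr 1
  rw [← (PiLp.volume_preserving_ofLp (Fin 3)).integral_comp
    (MeasurableEquiv.toLp 2 (Fin 3 → ℝ)).symm.measurableEmbedding]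
  congr 1
  ext v
  simp only [smul_eq_mul]
  congr 2
  have h1 : ∀ i, ((s.trans e.symm) ξ) i = (2 * Real.pi)⁻¹ * ξ i := fun i => rfl
  rw [mul_comm]
  congr 2
  rw [PiLp.inner_apply, Fin.sum_univ_three]
  simp only [h1, RCLike.inner_apply, conj_trivial]
  field_simp

/-- Fubini for functions on `(0,∞) × ℝ³`, with an integrable majorant on `0 < t ≤ 1` and with the
decay `t^{-3/2}` of the spatial `L¹` norm at infinity. -/
lemma swap_of_bounds (G : ℝ → (Fin 3 → ℝ) → ℂ)
    (hm : AEStronglyMeasurable (Function.uncurry G) ((volume.restrict (Set.Ioi 0)).prod volume))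
    (hG : ∀ t, 0 < t → Integrable (G t)) (C : ℝ)
    (h0 : ∀ t, 0 < t → t ≤ 1 → ∫ x, ‖G t x‖ ≤ C)
    (h1 : ∀ t, 1 < t → ∫ x, ‖G t x‖ ≤ C * t ^ (-(3 / 2) : ℝ)) :
    ∫ x, ∫ t in Set.Ioi 0, G t x = ∫ t in Set.Ioi 0, ∫ x, G t x := by
  refine (integral_integral_swap ((integrable_prod_iff hm).2 ⟨?_, ?_⟩)).symm
  · filter_upwards [ae_restrict_mem measurableSet_Ioi] with t ht using hG t ht
  · have hm' := hm.norm.integral_prod_right'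
    change IntegrableOn _ (Set.Ioi 0) volume
    rw [← Set.Ioc_union_Ioi_eq_Ioi zero_le_one]
    have hr : ∀ s ⊆ Set.Ioi (0 : ℝ), AEStronglyMeasurable
        (fun t => ∫ x, ‖Function.uncurry G (t, x)‖) (volume.restrict s) :=
      fun s hs => hm'.mono_measure (Measure.restrict_mono hs le_rfl)
    refine IntegrableOn.union ?_ ?_
    · refine Integrable.mono' (g := fun _ => C) (integrable_const _)
        (hr _ fun t ht => ht.1) ?_
      filter_upwards [ae_restrict_mem measurableSet_Ioc] with t ht
      rw [Real.norm_of_nonneg (integral_nonneg fun _ => norm_nonneg _)]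
      exact h0 t ht.1 ht.2
    · refine Integrable.mono' (g := fun t => C * t ^ (-(3 / 2) : ℝ))
        ((integrableOn_Ioi_rpow_of_lt (by norm_num) one_pos).const_mul C)
        (hr _ fun t ht => Set.mem_Ioi.2 (zero_lt_one.trans ht)) ?_
      filter_upwards [ae_restrict_mem measurableSet_Ioi] with t ht
      rw [Real.norm_of_nonneg (integral_nonneg fun _ => norm_nonneg _)]
      exact h1 t ht

/-! ### Gamma integrals in the subordination parameter -/

/-- Subordination: `ξ₁⁴/|ξ|⁶` as a superposition of Gaussians. -/
lemma symbol_eq (ξ : Fin 3 → ℝ) :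
    ∫ t in Set.Ioi (0 : ℝ), t ^ 2 / 2 * (ξ 0 ^ 4 *
      Real.exp (-t * (ξ 0 ^ 2 + ξ 1 ^ 2 + ξ 2 ^ 2)))
      = ξ 0 ^ 4 / (ξ 0 ^ 2 + ξ 1 ^ 2 + ξ 2 ^ 2) ^ 3 := by
  -- for `ξ 0 = 0`, in particular at the origin where `0 / 0 = 0`, both sides vanish
  by_cases h : ξ 0 = 0
  · simp [h]
  have hs : 0 < ξ 0 ^ 2 + ξ 1 ^ 2 + ξ 2 ^ 2 := by positivity
  generalize ξ 0 ^ 2 + ξ 1 ^ 2 + ξ 2 ^ 2 = s at *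
  have := Real.integral_rpow_mul_exp_neg_mul_Ioi (a := 3) (by norm_num) hs
  have e : ∀ t : ℝ, t ^ 2 / 2 * (ξ 0 ^ 4 * Real.exp (-t * s))
      = ξ 0 ^ 4 / 2 * (t ^ ((3 : ℝ) - 1) * Real.exp (-(s * t))) := by
    intro t
    rw [show (3 : ℝ) - 1 = (2 : ℕ) by norm_num, Real.rpow_natCast]
    rw [show -t * s = -(s * t) by ring]; ring
  simp_rw [e]
  rw [integral_const_mul, this, show (3 : ℝ) = ((2 : ℕ) : ℝ) + 1 by norm_num,
    Real.Gamma_nat_eq_factorial, show ((2 : ℕ) : ℝ) + 1 = ((3 : ℕ) : ℝ) by norm_num,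
    Real.rpow_natCast]
  norm_num [Nat.factorial]
  field_simp

/-- The time integral of the heat-type kernels, computed after the substitution `t ↦ 1/t` from
`Γ(1/2)`, `Γ(3/2)` and `Γ(5/2)`. -/
lemma kernel_eq (x : Fin 3 → ℝ) (hx : 0 < x 0 ^ 2 + x 1 ^ 2 + x 2 ^ 2) :
    ∫ t in Set.Ioi (0 : ℝ), t ^ 2 / 2 * heatK t x
      = 3 * (x 1 ^ 2 + x 2 ^ 2) ^ 2 /
        (32 * Real.pi * (x 0 ^ 2 + x 1 ^ 2 + x 2 ^ 2) ^ ((5 : ℝ) / 2)) := by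
  have hr : x 1 ^ 2 + x 2 ^ 2 = (x 0 ^ 2 + x 1 ^ 2 + x 2 ^ 2) - x 0 ^ 2 := by ring
  rw [hr]
  simp only [heatK]
  generalize x 0 ^ 2 + x 1 ^ 2 + x 2 ^ 2 = s at *
  generalize x 0 = y at *
  rw [← integral_comp_rpow_Ioi _ (p := -1) (by norm_num)]
  have hs4 : 0 < s / 4 := by positivity
  have J : ∀ a : ℝ, 0 < a →
      IntegrableOn (fun t : ℝ => t ^ (a - 1) * Real.exp (-(s / 4 * t))) (Set.Ioi 0) := by
    intro a ha
    -- a non-integrable function has Bochner integral zero, but the Gamma value is positive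
    by_contra hn
    have h1 := integral_undef hn
    rw [Real.integral_rpow_mul_exp_neg_mul_Ioi ha hs4] at h1
    have h2 := Real.Gamma_pos_of_pos ha
    have : 0 < (1 / (s / 4)) ^ a * Real.Gamma a := by positivity
    exact this.ne' h1
  have J1 := J (1 / 2) (by norm_num)
  have J2 := J (3 / 2) (by norm_num)
  have J3 := J (5 / 2) (by norm_num)
  set c := ((2 * Real.pi) ^ 3)⁻¹ * √Real.pi ^ 3 / 2 with hc
  have e : Set.EqOn (fun t : ℝ => (|(-1 : ℝ)| * t ^ ((-1 : ℝ) - 1)) • ((t ^ (-1 : ℝ)) ^ 2 / 2 *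
      (((2 * Real.pi) ^ 3)⁻¹ * (√(Real.pi / t ^ (-1 : ℝ)) ^ 3 *
      (3 / (4 * (t ^ (-1 : ℝ)) ^ 2) - 3 * y ^ 2 / (4 * (t ^ (-1 : ℝ)) ^ 3) +
        y ^ 4 / (16 * (t ^ (-1 : ℝ)) ^ 4)) * Real.exp (-s / (4 * t ^ (-1 : ℝ)))))))
      (fun t => c * (3 / 4) * (t ^ ((1 / 2 : ℝ) - 1) * Real.exp (-(s / 4 * t)))
        - c * (3 / 4 * y ^ 2) * (t ^ ((3 / 2 : ℝ) - 1) * Real.exp (-(s / 4 * t)))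
        + c * (y ^ 4 / 16) * (t ^ ((5 / 2 : ℝ) - 1) * Real.exp (-(s / 4 * t)))) (Set.Ioi 0) := by
    intro t ht
    have ht : 0 < t := ht
    have a1 : t ^ ((1 / 2 : ℝ) - 1) = √t / t := by
      rw [Real.rpow_sub_one ht.ne', Real.sqrt_eq_rpow]
    have a2 : t ^ ((3 / 2 : ℝ) - 1) = √t := by
      rw [Real.sqrt_eq_rpow]; norm_num
    have a3 : t ^ ((5 / 2 : ℝ) - 1) = √t * t := by
      rw [Real.sqrt_eq_rpow, ← Real.rpow_add_one ht.ne']; norm_num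
    have a4 : t ^ ((-1 : ℝ) - 1) = (t ^ 2)⁻¹ := by
      rw [show (-1 : ℝ) - 1 = -((2 : ℕ) : ℝ) by norm_num, Real.rpow_neg ht.le, Real.rpow_natCast]
    simp only [a1, a2, a3, a4, Real.rpow_neg_one, smul_eq_mul, hc, div_inv_eq_mul,
      Real.sqrt_mul Real.pi_pos.le]
    have a5 : -s / (4 * t⁻¹) = -(s / 4 * t) := by field_simp
    have a6 : √t ^ 3 = √t * t := by rw [pow_succ, Real.sq_sqrt ht.le]; ring
    rw [a5, mul_pow √Real.pi √t, a6]
    norm_num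
    field_simp
  rw [setIntegral_congr_fun measurableSet_Ioi e]
  have J12 : IntegrableOn
      (fun t => c * (3 / 4) * (t ^ ((1 / 2 : ℝ) - 1) * Real.exp (-(s / 4 * t)))
        - c * (3 / 4 * y ^ 2) * (t ^ ((3 / 2 : ℝ) - 1) * Real.exp (-(s / 4 * t)))) (Set.Ioi 0) :=
    (J1.const_mul _).sub (J2.const_mul _)
  rw [integral_add J12 (J3.const_mul _),
    integral_sub (J1.const_mul _) (J2.const_mul _), integral_const_mul, integral_const_mul,
    integral_const_mul, Real.integral_rpow_mul_exp_neg_mul_Ioi (by norm_num) hs4,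
    Real.integral_rpow_mul_exp_neg_mul_Ioi (by norm_num) hs4,
    Real.integral_rpow_mul_exp_neg_mul_Ioi (by norm_num) hs4]
  have g1 := Real.Gamma_one_half_eq
  have g2 : Real.Gamma (3 / 2) = 1 / 2 * √Real.pi := by
    rw [← g1, ← Real.Gamma_add_one (by norm_num)]; norm_num
  have g3 : Real.Gamma (5 / 2) = 3 / 4 * √Real.pi := by
    rw [show (5 / 2 : ℝ) = 3 / 2 + 1 by norm_num, Real.Gamma_add_one (by norm_num), g2]; ring
  have hinv : 1 / (s / 4) = 4 / s := by field_simp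
  have hq : 0 < 4 / s := by positivity
  have hsq : √(4 / s) = 2 / √s := by
    rw [Real.sqrt_div (by norm_num), show (4 : ℝ) = 2 ^ 2 by norm_num, Real.sqrt_sq (by norm_num)]
  have p1 : (4 / s) ^ (1 / 2 : ℝ) = 2 / √s := by rw [← Real.sqrt_eq_rpow, hsq]
  have p2 : (4 / s) ^ (3 / 2 : ℝ) = 2 / √s * (4 / s) := by
    rw [← p1, ← Real.rpow_add_one hq.ne']; norm_num
  have p3 : (4 / s) ^ (5 / 2 : ℝ) = 2 / √s * (4 / s) * (4 / s) := by
    rw [← p2, ← Real.rpow_add_one hq.ne']; norm_num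
  have p4 : s ^ (5 / 2 : ℝ) = √s * s ^ 2 := by
    rw [Real.sqrt_eq_rpow, ← Real.rpow_natCast, ← Real.rpow_add hx]; norm_num
  have hss : 0 < √s := Real.sqrt_pos.2 hx
  have hpp : 0 < √Real.pi := Real.sqrt_pos.2 Real.pi_pos
  have hpi : √Real.pi ^ 2 = Real.pi := Real.sq_sqrt Real.pi_pos.le
  rw [hinv, p1, p2, p3, p4, g1, g2, g3, hc]
  generalize √s = q at *
  generalize √Real.pi = w at *
  rw [← hpi]
  field_simp
  ring

/-! ### Pointwise bounds -/

/-- Half of the Gaussian exponent absorbs the polynomial factor. -/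
lemma sq_mul_exp_le {w : ℝ} (hw : 0 ≤ w) : w ^ 2 * Real.exp (-w) ≤ 8 * Real.exp (-(w / 2)) := by
  have h := Real.quadratic_le_exp_of_nonneg (x := w / 2) (by positivity)
  have e : Real.exp (-(w / 2)) = Real.exp (w / 2) * Real.exp (-w) := by
    rw [← Real.exp_add]; congr 1; ring
  rw [e, ← mul_assoc]
  gcongr
  nlinarith

lemma poly_mul_exp_le {w : ℝ} (hw : 0 ≤ w) :
    (3 / 4 + 3 / 4 * w + w ^ 2 / 16) * Real.exp (-(w / 4)) ≤ 8 * Real.exp (-(w / 8)) := by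
  have h := Real.quadratic_le_exp_of_nonneg (x := w / 8) (by positivity)
  have e : Real.exp (-(w / 8)) = Real.exp (w / 8) * Real.exp (-(w / 4)) := by
    rw [← Real.exp_add]; congr 1; ring
  rw [e, ← mul_assoc]
  gcongr
  nlinarith

lemma sqrt_div_pow_three {a t : ℝ} (ha : 0 ≤ a) (ht : 0 < t) :
    √(a / t) ^ 3 = √a ^ 3 * t ^ (-(3 / 2) : ℝ) := by
  rw [Real.sqrt_div ha, div_pow, Real.rpow_neg ht.le, Real.sqrt_eq_rpow t, ← Real.rpow_natCast (t ^ _),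
    ← Real.rpow_mul ht.le, div_eq_mul_inv]
  norm_num

lemma symbol_bound {t : ℝ} (ht : 0 < t) (ξ : Fin 3 → ℝ) :
    |t ^ 2 / 2 * (ξ 0 ^ 4 * Real.exp (-t * (ξ 0 ^ 2 + ξ 1 ^ 2 + ξ 2 ^ 2)))|
      ≤ 4 * Real.exp (-(t / 2) * (ξ 0 ^ 2 + ξ 1 ^ 2 + ξ 2 ^ 2)) := by
  rw [abs_of_nonneg (by positivity)]
  have hs : ξ 0 ^ 4 ≤ (ξ 0 ^ 2 + ξ 1 ^ 2 + ξ 2 ^ 2) ^ 2 := by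
    rw [show ξ 0 ^ 4 = (ξ 0 ^ 2) ^ 2 by ring]
    gcongr
    nlinarith [sq_nonneg (ξ 1), sq_nonneg (ξ 2)]
  have hn : 0 ≤ ξ 0 ^ 2 + ξ 1 ^ 2 + ξ 2 ^ 2 := by positivity
  generalize ξ 0 ^ 2 + ξ 1 ^ 2 + ξ 2 ^ 2 = s at *
  have h := sq_mul_exp_le (w := t * s) (by positivity)
  calc _ ≤ t ^ 2 / 2 * (s ^ 2 * Real.exp (-t * s)) := by gcongr
    _ = ((t * s) ^ 2 * Real.exp (-(t * s))) / 2 := by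
      rw [show -t * s = -(t * s) by ring]; ring
    _ ≤ (8 * Real.exp (-(t * s / 2))) / 2 := by gcongr
    _ = _ := by rw [show -(t * s / 2) = -(t / 2) * s by ring]; ring

/-- The constant in the pointwise Gaussian bound of the kernels. -/
noncomputable def kerConst : ℝ := 4 * ((2 * Real.pi) ^ 3)⁻¹ * √Real.pi ^ 3

lemma kerConst_nonneg : 0 ≤ kerConst := by unfold kerConst; positivity

lemma kernel_bound {t : ℝ} (ht : 0 < t) (x : Fin 3 → ℝ) :
    |t ^ 2 / 2 * heatK t x| ≤ kerConst * t ^ (-(3 / 2) : ℝ) *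
      Real.exp (-(1 / (8 * t)) * (x 0 ^ 2 + x 1 ^ 2 + x 2 ^ 2)) := by
  have hs : x 0 ^ 2 ≤ x 0 ^ 2 + x 1 ^ 2 + x 2 ^ 2 := by
    nlinarith [sq_nonneg (x 1), sq_nonneg (x 2)]
  have hn : 0 ≤ x 0 ^ 2 := by positivity
  simp only [heatK, sqrt_div_pow_three Real.pi_pos.le ht]
  generalize x 0 ^ 2 + x 1 ^ 2 + x 2 ^ 2 = s at *
  rw [show x 0 ^ 4 = (x 0 ^ 2) ^ 2 by ring]
  generalize x 0 ^ 2 = y at *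
  have hs0 : 0 ≤ s := hn.trans hs
  have h := poly_mul_exp_le (w := s / t) (by positivity)
  have e1 : t ^ 2 / 2 * (((2 * Real.pi) ^ 3)⁻¹ * (√Real.pi ^ 3 * t ^ (-(3 / 2) : ℝ) *
      (3 / (4 * t ^ 2) - 3 * y / (4 * t ^ 3) + y ^ 2 / (16 * t ^ 4)) * Real.exp (-s / (4 * t))))
      = (((2 * Real.pi) ^ 3)⁻¹ * √Real.pi ^ 3 * t ^ (-(3 / 2) : ℝ) / 2) *
      ((3 / 4 - 3 / 4 * (y / t) + (y / t) ^ 2 / 16) * Real.exp (-(s / t / 4))) := by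
    rw [show -s / (4 * t) = -(s / t / 4) by field_simp]
    field_simp
  have hyt : y / t ≤ s / t := by gcongr
  have hy0 : 0 ≤ y / t := by positivity
  have e2 : |3 / 4 - 3 / 4 * (y / t) + (y / t) ^ 2 / 16|
      ≤ 3 / 4 + 3 / 4 * (s / t) + (s / t) ^ 2 / 16 := by
    have : (y / t) ^ 2 ≤ (s / t) ^ 2 := by gcongr
    have := sq_nonneg (y / t)
    rw [abs_le]
    constructor <;> linarith
  have hc : 0 ≤ ((2 * Real.pi) ^ 3)⁻¹ * √Real.pi ^ 3 * t ^ (-(3 / 2) : ℝ) / 2 := by positivity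
  rw [e1, abs_mul, abs_mul, abs_of_nonneg hc, abs_of_pos (Real.exp_pos _)]
  calc _ ≤ (((2 * Real.pi) ^ 3)⁻¹ * √Real.pi ^ 3 * t ^ (-(3 / 2) : ℝ) / 2) *
        (8 * Real.exp (-(s / t / 8))) := by
        refine mul_le_mul_of_nonneg_left (le_trans ?_ h) hc
        gcongr
    _ = _ := by
      rw [show -(s / t / 8) = -(1 / (8 * t)) * s by field_simp, kerConst]; ring

/-! ### Exchange of integrals -/

/-- Symmetry of the Fourier transform, for the Gaussian-damped symbol. -/
lemma pairing_eq (φ : SchwartzMap (Fin 3 → ℝ) ℂ) {t : ℝ} (ht : 0 < t) :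
    ∫ ξ : Fin 3 → ℝ, ((ξ 0 ^ 4 * Real.exp (-t * (ξ 0 ^ 2 + ξ 1 ^ 2 + ξ 2 ^ 2)) : ℝ) : ℂ) *
        invFT (fun v => φ v) ξ
      = ∫ x : Fin 3 → ℝ, (heatK t x : ℂ) * φ x := by
  set g : (Fin 3 → ℝ) → ℂ := fun ξ =>
    ((ξ 0 ^ 4 * Real.exp (-t * (ξ 0 ^ 2 + ξ 1 ^ 2 + ξ 2 ^ 2)) : ℝ) : ℂ) with hg
  have hgc : Continuous g := by fun_prop
  have hgi : Integrable g := by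
    refine Integrable.mono' (((gauss3 (half_pos ht)).1.const_mul (4 * (2 / t ^ 2))))
      hgc.aestronglyMeasurable (ae_of_all _ fun ξ => ?_)
    have h := symbol_bound ht ξ
    rw [abs_mul, abs_of_pos (by positivity : 0 < t ^ 2 / 2)] at h
    rw [hg, Complex.norm_real, Real.norm_eq_abs]
    rw [mul_comm, ← le_div_iff₀ (by positivity)] at h
    refine h.trans (le_of_eq ?_)
    field_simp
  let E : (Fin 3 → ℝ) → (Fin 3 → ℝ) → ℂ := fun ξ x =>
    Complex.exp (Complex.I * ((ξ 0 * x 0 + ξ 1 * x 1 + ξ 2 * x 2 : ℝ) : ℂ))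
  have hE : ∀ ξ x, ‖E ξ x‖ = 1 := fun ξ x => by
    simp only [E]; rw [mul_comm, Complex.norm_exp_ofReal_mul_I]
  let c : ℂ := ((((2 * Real.pi) ^ 3)⁻¹ : ℝ) : ℂ)
  have hi : Integrable (Function.uncurry fun ξ x => c * (g ξ * E ξ x * φ x))
      (volume.prod volume) := by
    refine Integrable.const_mul ?_ c
    refine Integrable.mono (hgi.mul_prod φ.integrable) ?_ (ae_of_all _ fun p => ?_)
    · refine Continuous.aestronglyMeasurable ?_
      have := φ.continuous
      simp only [E]
      fun_prop
    · simp [hE]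
  calc _ = ∫ ξ, ∫ x, c * (g ξ * E ξ x * φ x) := by
        congr 1; ext ξ
        rw [integral_const_mul]
        simp_rw [mul_assoc]
        rw [integral_const_mul, invFT, Complex.real_smul]
        simp only [E, c]
        ring
    _ = ∫ x, ∫ ξ, c * (g ξ * E ξ x * φ x) := integral_integral_swap hi
    _ = _ := by
        congr 1; ext x
        rw [integral_const_mul, integral_mul_const, ← integral_osc3 ht x, mul_assoc]

/-- Fubini on the frequency side. For small `t` the majorant is `‖ξ‖⁴ |ψ|`, for large `t` it is a
multiple of `e^{-t|ξ|²/2}`. -/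
lemma swap_symbol (ψ : SchwartzMap (Fin 3 → ℝ) ℂ) :
    ∫ ξ : Fin 3 → ℝ, ∫ t in Set.Ioi (0 : ℝ), ((t ^ 2 / 2 * (ξ 0 ^ 4 *
        Real.exp (-t * (ξ 0 ^ 2 + ξ 1 ^ 2 + ξ 2 ^ 2))) : ℝ) : ℂ) * ψ ξ
      = ∫ t in Set.Ioi (0 : ℝ), ∫ ξ : Fin 3 → ℝ, ((t ^ 2 / 2 * (ξ 0 ^ 4 *
        Real.exp (-t * (ξ 0 ^ 2 + ξ 1 ^ 2 + ξ 2 ^ 2))) : ℝ) : ℂ) * ψ ξ := by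
  have hψ := ψ.continuous
  obtain ⟨B, hB⟩ : ∃ B, ∀ x, ‖ψ x‖ ≤ B :=
    ⟨_, fun x => ψ.toBoundedContinuousFunction.norm_coe_le_norm x⟩
  have hB0 : 0 ≤ B := (norm_nonneg _).trans (hB 0)
  have hb : ∀ t, 0 < t → ∀ ξ : Fin 3 → ℝ, ‖((t ^ 2 / 2 * (ξ 0 ^ 4 *
        Real.exp (-t * (ξ 0 ^ 2 + ξ 1 ^ 2 + ξ 2 ^ 2))) : ℝ) : ℂ) * ψ ξ‖
      ≤ 4 * B * Real.exp (-(t / 2) * (ξ 0 ^ 2 + ξ 1 ^ 2 + ξ 2 ^ 2)) := fun t ht ξ => by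
    rw [norm_mul, Complex.norm_real, Real.norm_eq_abs]
    calc _ ≤ 4 * Real.exp (-(t / 2) * (ξ 0 ^ 2 + ξ 1 ^ 2 + ξ 2 ^ 2)) * B :=
          mul_le_mul (symbol_bound ht ξ) (hB ξ) (norm_nonneg _) (by positivity)
      _ = _ := by ring
  have hint : ∀ t, 0 < t → Integrable fun ξ : Fin 3 → ℝ => ((t ^ 2 / 2 * (ξ 0 ^ 4 *
        Real.exp (-t * (ξ 0 ^ 2 + ξ 1 ^ 2 + ξ 2 ^ 2))) : ℝ) : ℂ) * ψ ξ := fun t ht =>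
    Integrable.mono' ((gauss3 (half_pos ht)).1.const_mul (4 * B))
      (Continuous.aestronglyMeasurable (by fun_prop)) (ae_of_all _ (hb t ht))
  have hdec := ψ.integrable_pow_mul volume 4
  refine swap_of_bounds _ ?_ hint
    (max (∫ ξ, ‖ξ‖ ^ 4 * ‖ψ ξ‖) (4 * B * √(2 * Real.pi) ^ 3)) ?_ ?_
  · exact Continuous.aestronglyMeasurable (by fun_prop)
  · intro t ht ht1
    refine le_trans (integral_mono (hint t ht).norm hdec fun ξ => ?_) (le_max_left _ _)
    simp only [norm_mul, Complex.norm_real]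
    have h1 : ‖ξ 0‖ ≤ ‖ξ‖ := norm_le_pi_norm ξ 0
    gcongr
    rw [← norm_mul, ← norm_mul, Real.norm_of_nonneg (by positivity)]
    have h4 : ξ 0 ^ 4 ≤ ‖ξ‖ ^ 4 := by
      rw [← (by decide : Even 4).pow_abs (ξ 0)]
      exact pow_le_pow_left₀ (abs_nonneg _) h1 4
    have h2 : Real.exp (-t * (ξ 0 ^ 2 + ξ 1 ^ 2 + ξ 2 ^ 2)) ≤ 1 := by
      rw [Real.exp_le_one_iff, neg_mul, neg_nonpos]; positivity
    have h3 : t ^ 2 / 2 ≤ 1 := by nlinarith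
    calc _ ≤ 1 * (‖ξ‖ ^ 4 * 1) := by gcongr
      _ = _ := by ring
  · intro t ht1
    have ht : 0 < t := zero_lt_one.trans ht1
    refine le_trans (integral_mono (hint t ht).norm
      ((gauss3 (half_pos ht)).1.const_mul (4 * B)) (hb t ht)) ?_
    rw [integral_const_mul, (gauss3 (half_pos ht)).2,
      show Real.pi / (t / 2) = 2 * Real.pi / t by field_simp,
      sqrt_div_pow_three (by positivity) ht, ← mul_assoc]
    gcongr
    exact le_max_right _ _

/-- Fubini on the space side. By `kernel_bound` the spatial norm is at most a multiple of
`t^{-3/2} ∫ e^{-|x|²/(8t)} dx` for small `t`, which is constant, and of `t^{-3/2} ∫ |φ|` for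
large `t`. -/
lemma swap_kernel (φ : SchwartzMap (Fin 3 → ℝ) ℂ) :
    ∫ x : Fin 3 → ℝ, ∫ t in Set.Ioi (0 : ℝ), ((t ^ 2 / 2 * heatK t x : ℝ) : ℂ) * φ x
      = ∫ t in Set.Ioi (0 : ℝ), ∫ x : Fin 3 → ℝ, ((t ^ 2 / 2 * heatK t x : ℝ) : ℂ) * φ x := by
  have hφ := φ.continuous.measurable
  obtain ⟨B, hB⟩ : ∃ B, ∀ x, ‖φ x‖ ≤ B :=
    ⟨_, fun x => φ.toBoundedContinuousFunction.norm_coe_le_norm x⟩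
  have hB0 : 0 ≤ B := (norm_nonneg _).trans (hB 0)
  have hk := kerConst_nonneg
  have hM : Measurable (Function.uncurry fun (t : ℝ) (x : Fin 3 → ℝ) =>
      ((t ^ 2 / 2 * heatK t x : ℝ) : ℂ) * φ x) := by
    unfold heatK; fun_prop
  have hb1 : ∀ t, 0 < t → ∀ x : Fin 3 → ℝ, ‖((t ^ 2 / 2 * heatK t x : ℝ) : ℂ) * φ x‖
      ≤ kerConst * t ^ (-(3 / 2) : ℝ) * ‖φ x‖ := fun t ht x => by
    rw [norm_mul, Complex.norm_real, Real.norm_eq_abs]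
    gcongr
    refine (kernel_bound ht x).trans (mul_le_of_le_one_right (by positivity) ?_)
    rw [Real.exp_le_one_iff, neg_mul, neg_nonpos]; positivity
  have hb0 : ∀ t, 0 < t → ∀ x : Fin 3 → ℝ, ‖((t ^ 2 / 2 * heatK t x : ℝ) : ℂ) * φ x‖
      ≤ kerConst * t ^ (-(3 / 2) : ℝ) * B *
        Real.exp (-(1 / (8 * t)) * (x 0 ^ 2 + x 1 ^ 2 + x 2 ^ 2)) := fun t ht x => by
    rw [norm_mul, Complex.norm_real, Real.norm_eq_abs, mul_right_comm]
    exact mul_le_mul (kernel_bound ht x) (hB x) (norm_nonneg _) (by positivity)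
  have hint : ∀ t, 0 < t → Integrable fun x : Fin 3 → ℝ =>
      ((t ^ 2 / 2 * heatK t x : ℝ) : ℂ) * φ x := fun t ht =>
    Integrable.mono' (φ.integrable.norm.const_mul _)
      (hM.comp measurable_prodMk_left).aestronglyMeasurable (ae_of_all _ (hb1 t ht))
  refine swap_of_bounds _ hM.aestronglyMeasurable hint
    (max (kerConst * B * √(8 * Real.pi) ^ 3) (kerConst * ∫ x, ‖φ x‖)) ?_ ?_
  · intro t ht _
    have hg := gauss3 (b := 1 / (8 * t)) (by positivity)
    refine le_trans (integral_mono (hint t ht).norm (hg.1.const_mul _) (hb0 t ht))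
      (le_trans (le_of_eq ?_) (le_max_left _ _))
    rw [integral_const_mul, hg.2,
      show Real.pi / (1 / (8 * t)) = 8 * Real.pi / t⁻¹ by field_simp,
      sqrt_div_pow_three (by positivity) (inv_pos.2 ht), Real.inv_rpow ht.le]
    have : t ^ (-(3 / 2) : ℝ) ≠ 0 := (Real.rpow_pos_of_pos ht _).ne'
    field_simp
  · intro t ht1
    have ht : 0 < t := zero_lt_one.trans ht1
    refine le_trans (integral_mono (hint t ht).norm (φ.integrable.norm.const_mul _) (hb1 t ht)) ?_
    rw [integral_const_mul, mul_right_comm]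
    gcongr
    exact le_max_right _ _

/-! ### The identity -/

/-- As a tempered distribution, the inverse Fourier transform of
`ξ₁⁴/|ξ|⁶` equals `3(y²+z²)²/(32π(x²+y²+z²)^{5/2})`. -/
theorem invFT_xi1_pow_four :
    ∀ φ : SchwartzMap (Fin 3 → ℝ) ℂ,
      ∫ ξ : Fin 3 → ℝ,
          (((ξ 0) ^ 4 / ((ξ 0) ^ 2 + (ξ 1) ^ 2 + (ξ 2) ^ 2) ^ 3 : ℝ) : ℂ) * invFT (fun v => φ v) ξ
        = ∫ x : Fin 3 → ℝ,
          ((3 * ((x 1) ^ 2 + (x 2) ^ 2) ^ 2 /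
            (32 * Real.pi * ((x 0) ^ 2 + (x 1) ^ 2 + (x 2) ^ 2) ^ ((5 : ℝ) / 2)) : ℝ) : ℂ) * φ x := by
  intro φ
  obtain ⟨ψ, hψ⟩ := exists_schwartz_invFT φ
  calc _ = ∫ ξ : Fin 3 → ℝ, ∫ t in Set.Ioi (0 : ℝ), ((t ^ 2 / 2 * (ξ 0 ^ 4 *
        Real.exp (-t * (ξ 0 ^ 2 + ξ 1 ^ 2 + ξ 2 ^ 2))) : ℝ) : ℂ) * ψ ξ := by
        congr 1; ext ξ
        rw [integral_mul_const, integral_complex_ofReal, symbol_eq, hψ]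
    _ = ∫ t in Set.Ioi (0 : ℝ), ∫ ξ : Fin 3 → ℝ, ((t ^ 2 / 2 * (ξ 0 ^ 4 *
        Real.exp (-t * (ξ 0 ^ 2 + ξ 1 ^ 2 + ξ 2 ^ 2))) : ℝ) : ℂ) * ψ ξ := swap_symbol ψ
    _ = ∫ t in Set.Ioi (0 : ℝ), ∫ x : Fin 3 → ℝ, ((t ^ 2 / 2 * heatK t x : ℝ) : ℂ) * φ x := by
        refine setIntegral_congr_fun measurableSet_Ioi fun t ht => ?_
        simp_rw [Complex.ofReal_mul (t ^ 2 / 2), mul_assoc]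
        rw [integral_const_mul, integral_const_mul, ← pairing_eq φ ht]
        simp_rw [hψ]
    _ = ∫ x : Fin 3 → ℝ, ∫ t in Set.Ioi (0 : ℝ), ((t ^ 2 / 2 * heatK t x : ℝ) : ℂ) * φ x :=
        (swap_kernel φ).symm
    _ = _ := by
        -- the time integral diverges at the origin, which is a null set
        refine integral_congr_ae ?_
        filter_upwards [compl_mem_ae_iff.2 (measure_singleton (0 : Fin 3 → ℝ))] with x hx
        have hs : 0 < x 0 ^ 2 + x 1 ^ 2 + x 2 ^ 2 := by
          refine lt_of_le_of_ne (by positivity) fun h => hx ?_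
          have h0 : x 0 = 0 := by nlinarith [sq_nonneg (x 0), sq_nonneg (x 1), sq_nonneg (x 2)]
          have h1 : x 1 = 0 := by nlinarith [sq_nonneg (x 0), sq_nonneg (x 1), sq_nonneg (x 2)]
          have h2 : x 2 = 0 := by nlinarith [sq_nonneg (x 0), sq_nonneg (x 1), sq_nonneg (x 2)]
          ext i
          fin_cases i <;> assumption
        rw [integral_mul_const, integral_complex_ofReal, kernel_eq x hs]
end

section
/- The inverse Fourier transform of ξ₁²ξ₂ξ₃/(|ξ|²)³ on ℝ³ equals yz(2x²−y²−z²)/(32π (x²+y²+z²)^{5/2}) as a tempered distribution. -/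
/-!
For `t > 0` the Gaussian `exp (-t|ξ|²)` has an explicit Fourier transform, and
`1/|ξ|⁶ = ½ ∫₀^∞ t² exp (-t|ξ|²) dt`. Hence the multiplier `ξ₁²ξ₂ξ₃/|ξ|⁶` is a superposition of
`ξ₁²ξ₂ξ₃ exp (-t|ξ|²)`, whose inverse Fourier transform factors into one-dimensional Gaussian
moments (`moment_one`, `moment_two`, `moment_three`). For each fixed `t`, Fubini in `(ξ, x)` gives
the Parseval identity `pairing_invFT`, hence `heat_pairing`: the pairing of the Gaussian piece with
`invFT φ` equals
`∫ (x₁² t^(-7/2) / 128 - t^(-5/2) / 64) π^(-3/2) x₂ x₃ exp (-|x|²/4t) φ(x) dx`.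

It remains to integrate over `t`. On either side this is an exchange of integrals justified by
absolute convergence (`fubini_weight`): the `t`-integrals are Gamma integrals which give kernels
of size `|ξ|⁻²` on the frequency side and `|x|⁻¹` on the space side, both locally integrable on
`ℝ³` and tamed at infinity by the decay of `invFT φ` and `φ`. The values `Γ(5/2) = 3√π/4` and
`Γ(3/2) = √π/2` then turn the right-hand side into `x₂x₃(3x₁² - |x|²)/(32π|x|⁵)`.

The integral over all of `(x, ξ, t)` is not absolutely convergent, which is why the exchange is done
in two stages, with `t` frozen in the first one.
-/

open MeasureTheory

/-! ### Exchanging the parameter integral with the space integral -/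

/-- The Gamma integral after the inversion `t ↦ 1/t`. -/
lemma gamma_inv {a c : ℝ} (ha : 0 < a) (hc : 0 < c) :
    IntegrableOn (fun t : ℝ => t ^ (-a - 1) * Real.exp (-(c / t))) (Set.Ioi 0) ∧
    ∫ t in Set.Ioi (0:ℝ), t ^ (-a - 1) * Real.exp (-(c / t)) = (1 / c) ^ a * Real.Gamma a := by
  have key : ∀ t ∈ Set.Ioi (0:ℝ), t ^ (-a - 1) * Real.exp (-(c / t)) =
      (|(-1 : ℝ)| * t ^ ((-1 : ℝ) - 1)) •
        (fun s : ℝ => s ^ (a - 1) * Real.exp (-(c * s))) (t ^ (-1 : ℝ)) := by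
    intro t ht
    have ht : 0 < t := ht
    simp only [smul_eq_mul, abs_neg, abs_one, one_mul]
    rw [← Real.rpow_mul ht.le, ← mul_assoc, ← Real.rpow_add ht, Real.rpow_neg_one]
    congr 2; ring
  have hint := Real.integral_rpow_mul_exp_neg_mul_Ioi ha hc
  constructor
  · rw [integrableOn_congr_fun key measurableSet_Ioi, integrableOn_Ioi_comp_rpow_iff
      (fun s : ℝ => s ^ (a - 1) * Real.exp (-(c * s))) (p := -1) (by norm_num)]
    have := integrableOn_rpow_mul_exp_neg_mul_rpow (p := 1) (s := a - 1) (by linarith) one_pos hc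
    simpa using this
  · rw [setIntegral_congr_fun measurableSet_Ioi key, integral_comp_rpow_Ioi
      (fun s : ℝ => s ^ (a - 1) * Real.exp (-(c * s))) (p := -1) (by norm_num), hint]

/-- A function on `ℝ³` dominated by `|x|⁻²(1+|x|²)⁻¹` is integrable: in polar coordinates the factor
`|x|⁻²` is absorbed by the volume element `r² dr`. -/
lemma integrable_of_decay {g : (Fin 3 → ℝ) → ℂ} (hg : AEStronglyMeasurable g) (C : ℝ)
    (h : ∀ x, x ≠ 0 → ‖g x‖ ≤ C * ((‖x‖ ^ 2)⁻¹ * (1 + ‖x‖ ^ 2)⁻¹)) : Integrable g := by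
  have h1 : Integrable (fun x : Fin 3 → ℝ =>
      (fun y : ℝ => (y ^ 2)⁻¹ * (1 + y ^ 2)⁻¹) ‖x‖) := by
    rw [integrable_fun_norm_addHaar (volume : Measure (Fin 3 → ℝ))
      (f := fun y : ℝ => (y ^ 2)⁻¹ * (1 + y ^ 2)⁻¹)]
    refine (integrable_inv_one_add_sq.integrableOn).congr_fun (fun y hy => ?_) measurableSet_Ioi
    have hy : 0 < y := hy
    simp
    field_simp
  refine (h1.const_mul C).mono' hg ?_
  filter_upwards [compl_mem_ae_iff.mpr (measure_singleton (0 : Fin 3 → ℝ))] with x hx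
  exact h x hx

/-- Tonelli and Fubini for a nonnegative family of weights `w x t` with `∫₀^∞ w x t dt = W x`, paired
with a function `g` such that `W g` is dominated by `|x|⁻²(1+|x|²)⁻¹`. The identities are needed
only off the null set `{0}`, where the weights may be singular. -/
lemma fubini_weight {w : (Fin 3 → ℝ) → ℝ → ℝ} {W : (Fin 3 → ℝ) → ℝ} {g : (Fin 3 → ℝ) → ℂ}
    (hw : Measurable (Function.uncurry w)) (hw0 : ∀ x, ∀ t, 0 < t → 0 ≤ w x t)
    (hwi : ∀ x, x ≠ 0 → IntegrableOn (w x) (Set.Ioi 0))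
    (hW : ∀ x, x ≠ 0 → ∫ t in Set.Ioi (0:ℝ), w x t = W x)
    (hg : Continuous g) (C : ℝ)
    (h : ∀ x, x ≠ 0 → W x * ‖g x‖ ≤ C * ((‖x‖ ^ 2)⁻¹ * (1 + ‖x‖ ^ 2)⁻¹)) :
    IntegrableOn (fun t => ∫ x, (w x t : ℂ) * g x) (Set.Ioi 0) ∧
    Integrable (fun x => (W x : ℂ) * g x) ∧
    ∫ t in Set.Ioi (0:ℝ), ∫ x, (w x t : ℂ) * g x = ∫ x, (W x : ℂ) * g x := by
  have h0 : ∀ᵐ x : Fin 3 → ℝ, x ≠ 0 := compl_mem_ae_iff.mpr (measure_singleton _)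
  have hm : Measurable (fun p : (Fin 3 → ℝ) × ℝ => (w p.1 p.2 : ℂ) * g p.1) :=
    (Complex.measurable_ofReal.comp hw).mul (hg.measurable.comp measurable_fst)
  have hI : Integrable (Function.uncurry fun x t => (w x t : ℂ) * g x)
      ((volume : Measure (Fin 3 → ℝ)).prod (volume.restrict (Set.Ioi (0:ℝ)))) := by
    refine (integrable_prod_iff hm.aestronglyMeasurable).2 ⟨?_, ?_⟩
    · filter_upwards [h0] with x hx
      exact ((hwi x hx).ofReal).mul_const _
    · have := integrable_of_decay (g := fun x => ((∫ t in Set.Ioi (0:ℝ), ‖(w x t : ℂ) * g x‖ : ℝ) : ℂ))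
        ?_ C ?_
      · simpa using this.re
      · exact (Complex.measurable_ofReal.comp
          (hm.norm.stronglyMeasurable.integral_prod_right').measurable).aestronglyMeasurable
      · intro x hx
        refine le_trans (le_of_eq ?_) (h x hx)
        rw [Complex.norm_real, Real.norm_of_nonneg (integral_nonneg fun _ => norm_nonneg _),
          ← hW x hx, ← integral_mul_const]
        refine setIntegral_congr_fun measurableSet_Ioi fun t ht => ?_
        simp [abs_of_nonneg (hw0 x t ht)]
  have hae : (fun x => ∫ t in Set.Ioi (0:ℝ), (w x t : ℂ) * g x) =ᵐ[volume]
      fun x => (W x : ℂ) * g x := by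
    filter_upwards [h0] with x hx
    rw [integral_mul_const, ← hW x hx, integral_complex_ofReal]
  refine ⟨hI.integral_prod_right, hI.integral_prod_left.congr hae, ?_⟩
  rw [← integral_integral_swap hI]
  exact integral_congr_ae hae

/-! ### Gaussian moments -/

lemma integrable_moment (k : ℕ) {t : ℝ} (ht : 0 < t) (x : ℝ) :
    Integrable fun ξ : ℝ => (ξ : ℂ) ^ k *
      (Complex.exp (Complex.I * x * ξ) * Complex.exp (-(t : ℂ) * ξ ^ 2)) := by
  have h := integrable_rpow_mul_exp_neg_mul_sq ht (s := k) (by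
    have : (0 : ℝ) ≤ k := k.cast_nonneg
    linarith)
  refine h.norm.mono' (by fun_prop) (Filter.Eventually.of_forall fun ξ => le_of_eq ?_)
  simp [Complex.norm_exp, pow_two]

lemma hasDerivAt_wave_gauss (x t ξ : ℝ) :
    HasDerivAt (fun ξ : ℝ => Complex.exp (Complex.I * x * ξ) * Complex.exp (-(t : ℂ) * ξ ^ 2))
      ((Complex.I * x - 2 * t * ξ) *
        (Complex.exp (Complex.I * x * ξ) * Complex.exp (-(t : ℂ) * ξ ^ 2))) ξ := by
  have h0 : HasDerivAt (fun ξ : ℝ => (ξ : ℂ)) 1 ξ := Complex.ofRealCLM.hasDerivAt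
  have h1 := (h0.const_mul (Complex.I * x)).cexp
  have h2 := ((h0.pow 2).const_mul (-(t : ℂ))).cexp
  refine (h1.mul h2).congr_deriv ?_
  simp
  ring

lemma moment_zero {t : ℝ} (ht : 0 < t) (x : ℝ) :
    ∫ ξ : ℝ, Complex.exp (Complex.I * x * ξ) * Complex.exp (-(t : ℂ) * ξ ^ 2) =
      ((√(Real.pi / t) * Real.exp (-(x ^ 2 / (4 * t))) : ℝ) : ℂ) := by
  rw [fourierIntegral_gaussian (by simpa using ht)]
  push_cast
  congr 1
  · rw [Real.sqrt_eq_rpow, Complex.ofReal_cpow (by positivity)]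
    push_cast; rfl
  · congr 1; ring

/-- The integral of the derivative of `exp (ixξ - tξ²)` vanishes, which expresses the first moment
through the zeroth. -/
lemma moment_one {t : ℝ} (ht : 0 < t) (x : ℝ) :
    ∫ ξ : ℝ, (ξ : ℂ) * (Complex.exp (Complex.I * x * ξ) * Complex.exp (-(t : ℂ) * ξ ^ 2)) =
      Complex.I * x / (2 * t) *
      ((√(Real.pi / t) * Real.exp (-(x ^ 2 / (4 * t))) : ℝ) : ℂ) := by
  have i0 := by simpa only [pow_zero, pow_one, one_mul] using integrable_moment 0 ht x
  have i1 := by simpa only [pow_zero, pow_one, one_mul] using integrable_moment 1 ht x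
  have h := integral_eq_zero_of_hasDerivAt_of_integrable
    (fun ξ => hasDerivAt_wave_gauss x t ξ) (by
      refine ((i0.const_mul (Complex.I * x)).sub (i1.const_mul (2 * (t : ℂ)))).congr
        (Filter.Eventually.of_forall fun ξ => ?_)
      simp; ring) i0
  have h' : Complex.I * x * ∫ ξ : ℝ,
        Complex.exp (Complex.I * x * ξ) * Complex.exp (-(t : ℂ) * ξ ^ 2) =
      2 * t * ∫ ξ : ℝ,
        (ξ : ℂ) * (Complex.exp (Complex.I * x * ξ) * Complex.exp (-(t : ℂ) * ξ ^ 2)) := by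
    rw [← sub_eq_zero, ← integral_const_mul, ← integral_const_mul,
      ← integral_sub (i0.const_mul _) (i1.const_mul _), ← h]
    congr 1; ext ξ; ring
  have ht' : (t : ℂ) ≠ 0 := by exact_mod_cast ht.ne'
  rw [moment_zero ht] at h'
  rw [← mul_right_inj' (mul_ne_zero two_ne_zero ht'), ← h']
  field_simp

/-- The integral of the derivative of `ξ exp (ixξ - tξ²)` vanishes, which expresses the second moment
through the first two. -/
lemma moment_two {t : ℝ} (ht : 0 < t) (x : ℝ) :
    ∫ ξ : ℝ, (ξ : ℂ) ^ 2 * (Complex.exp (Complex.I * x * ξ) * Complex.exp (-(t : ℂ) * ξ ^ 2)) =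
      (1 / (2 * t) - x ^ 2 / (4 * t ^ 2)) *
      ((√(Real.pi / t) * Real.exp (-(x ^ 2 / (4 * t))) : ℝ) : ℂ) := by
  have i0 := by simpa only [pow_zero, pow_one, one_mul] using integrable_moment 0 ht x
  have i1 := by simpa only [pow_zero, pow_one, one_mul] using integrable_moment 1 ht x
  have i2 := integrable_moment 2 ht x
  have h0 (ξ : ℝ) : HasDerivAt (fun ξ : ℝ => (ξ : ℂ)) 1 ξ := Complex.ofRealCLM.hasDerivAt
  have h := integral_eq_zero_of_hasDerivAt_of_integrable
    (fun ξ => (h0 ξ).mul (hasDerivAt_wave_gauss x t ξ)) (by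
      refine ((i0.add (i1.const_mul (Complex.I * x))).sub (i2.const_mul (2 * (t : ℂ)))).congr
        (Filter.Eventually.of_forall fun ξ => ?_)
      simp; ring) i1
  have h' : (∫ ξ : ℝ,
        Complex.exp (Complex.I * x * ξ) * Complex.exp (-(t : ℂ) * ξ ^ 2)) +
      (Complex.I * x) * (∫ ξ : ℝ,
        (ξ : ℂ) * (Complex.exp (Complex.I * x * ξ) * Complex.exp (-(t : ℂ) * ξ ^ 2))) =
      2 * t * ∫ ξ : ℝ,
        (ξ : ℂ) ^ 2 * (Complex.exp (Complex.I * x * ξ) * Complex.exp (-(t : ℂ) * ξ ^ 2)) := by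
    rw [← sub_eq_zero, ← integral_const_mul, ← integral_const_mul,
      ← integral_add i0 (i1.const_mul _), ← integral_sub _ (i2.const_mul _), ← h]
    swap
    · exact i0.add (i1.const_mul _)
    congr 1; ext ξ; simp; ring
  have ht' : (t : ℂ) ≠ 0 := by exact_mod_cast ht.ne'
  rw [moment_one ht, moment_zero ht] at h'
  have hI : Complex.I ^ 2 = -1 := Complex.I_sq
  set M := ((√(Real.pi / t) * Real.exp (-(x ^ 2 / (4 * t))) : ℝ) : ℂ)
  rw [← mul_right_inj' (mul_ne_zero two_ne_zero ht'), ← h']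
  field_simp
  linear_combination 4 * M * x ^ 2 * hI

/-- The Fourier integral of `ξ₁²ξ₂ξ₃ exp (-t|ξ|²)`, as a product of one-dimensional moments. -/
lemma moment_three {t : ℝ} (ht : 0 < t) (v : Fin 3 → ℝ) :
    ∫ ξ : Fin 3 → ℝ, ((ξ 0 ^ 2 * ξ 1 * ξ 2 *
        Real.exp (-(t * (ξ 0 ^ 2 + ξ 1 ^ 2 + ξ 2 ^ 2))) : ℝ) : ℂ) *
      Complex.exp (Complex.I * ((ξ 0 * v 0 + ξ 1 * v 1 + ξ 2 * v 2 : ℝ) : ℂ)) =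
    ((√(Real.pi / t) ^ 3 * (v 1 * v 2 / (4 * t ^ 2)) * (v 0 ^ 2 / (4 * t ^ 2) - 1 / (2 * t)) *
      Real.exp (-((v 0 ^ 2 + v 1 ^ 2 + v 2 ^ 2) / (4 * t))) : ℝ) : ℂ) := by
  have h := integral_fintype_prod_volume_eq_prod (ι := Fin 3) (E := fun _ => ℝ) (𝕜 := ℂ)
    (fun i ξ => (ξ : ℂ) ^ (![2, 1, 1] i : ℕ) *
      (Complex.exp (Complex.I * v i * ξ) * Complex.exp (-(t : ℂ) * ξ ^ 2)))
  simp only [Fin.prod_univ_three, Matrix.cons_val_zero, Matrix.cons_val_one, Matrix.cons_val,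
    pow_one] at h
  rw [moment_two ht, moment_one ht, moment_one ht] at h
  calc _ = _ := ?_
    _ = _ := h
    _ = _ := ?_
  · congr 1; ext ξ
    push_cast
    have e1 : -((t:ℂ) * ((ξ 0:ℂ) ^ 2 + (ξ 1:ℂ) ^ 2 + (ξ 2:ℂ) ^ 2)) =
      -(t:ℂ) * ξ 0 ^ 2 + -(t:ℂ) * ξ 1 ^ 2 + -(t:ℂ) * ξ 2 ^ 2 := by ring
    have e2 : Complex.I * ((ξ 0:ℂ) * v 0 + ξ 1 * v 1 + ξ 2 * v 2) =
      Complex.I * v 0 * ξ 0 + Complex.I * v 1 * ξ 1 + Complex.I * v 2 * ξ 2 := by ring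
    rw [e1, e2]
    simp only [Complex.exp_add]
    ring
  · have e1 : Real.exp (-((v 0 ^ 2 + v 1 ^ 2 + v 2 ^ 2) / (4 * t))) =
      Real.exp (-(v 0 ^ 2 / (4 * t))) * Real.exp (-(v 1 ^ 2 / (4 * t))) *
        Real.exp (-(v 2 ^ 2 / (4 * t))) := by
      rw [← Real.exp_add, ← Real.exp_add]; congr 1; ring
    rw [e1]
    have hI : Complex.I ^ 2 = -1 := Complex.I_sq
    have ht' : (t : ℂ) ≠ 0 := by exact_mod_cast ht.ne'
    simp only [Complex.ofReal_mul, Complex.ofReal_pow, Complex.ofReal_div, Complex.ofReal_sub,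
      Complex.ofReal_one, Complex.ofReal_ofNat]
    generalize (Real.exp (-(v 0 ^ 2 / (4 * t))) : ℂ) = a0
    generalize (Real.exp (-(v 1 ^ 2 / (4 * t))) : ℂ) = a1
    generalize (Real.exp (-(v 2 ^ 2 / (4 * t))) : ℂ) = a2
    generalize (√(Real.pi / t) : ℂ) = s
    linear_combination ((1 / (2 * t) - v 0 ^ 2 / (4 * t ^ 2)) * s ^ 3 * a0 * a1 * a2 *
      (v 1 * v 2 / (4 * t ^ 2)) : ℂ) * hI

/-! ### Decay of a Schwartz function and of its inverse Fourier transform -/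

/-- The norm on `Fin 3 → ℝ` is the sup norm; it is dominated by the Euclidean one. -/
lemma norm_le_euclid (x : Fin 3 → ℝ) : ‖x‖ ≤ √(x 0 ^ 2 + x 1 ^ 2 + x 2 ^ 2) := by
  refine (pi_norm_le_iff_of_nonneg (by positivity)).2 fun i => ?_
  refine Real.abs_le_sqrt ?_
  fin_cases i <;> simp <;> nlinarith [sq_nonneg (x 0), sq_nonneg (x 1), sq_nonneg (x 2)]

/-- `invFT φ` is a rescaled Schwartz function on Euclidean space, hence continuous and decaying. The
detour through `EuclideanSpace` is needed because `Fin 3 → ℝ` carries no inner product. -/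
lemma invFT_regular (φ : SchwartzMap (Fin 3 → ℝ) ℂ) :
    Continuous (invFT φ) ∧ ∃ C, ∀ ξ, (1 + ‖ξ‖ ^ 2) * ‖invFT φ ξ‖ ≤ C := by
  let f : SchwartzMap (EuclideanSpace ℝ (Fin 3)) ℂ :=
    SchwartzMap.compCLMOfContinuousLinearEquiv ℝ (EuclideanSpace.equiv (Fin 3) ℝ) φ
  let F : SchwartzMap (EuclideanSpace ℝ (Fin 3)) ℂ := FourierTransformInv.fourierInv f
  have key : ∀ ξ, invFT φ ξ =
      ((2 * Real.pi) ^ 3)⁻¹ • F (WithLp.toLp 2 ((2 * Real.pi)⁻¹ • ξ)) := by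
    intro ξ
    have : F (WithLp.toLp 2 ((2 * Real.pi)⁻¹ • ξ)) =
        FourierTransformInv.fourierInv (f : EuclideanSpace ℝ (Fin 3) → ℂ)
          (WithLp.toLp 2 ((2 * Real.pi)⁻¹ • ξ)) := by
      rw [← SchwartzMap.fourierInv_coe]
    rw [this, Real.fourierInv_eq', invFT, ← (PiLp.volume_preserving_toLp (Fin 3)).integral_comp
      (MeasurableEquiv.toLp 2 _).measurableEmbedding]
    congr 2; ext v
    have hf : f (WithLp.toLp 2 v) = φ v := rfl
    rw [hf, smul_eq_mul]
    congr 2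
    rw [mul_comm]
    congr 2
    simp [PiLp.inner_apply, Fin.sum_univ_three]
    field_simp
  refine ⟨?_, ?_⟩
  · have : invFT φ = fun ξ => ((2 * Real.pi) ^ 3)⁻¹ •
        F (WithLp.toLp 2 ((2 * Real.pi)⁻¹ • ξ)) := funext key
    rw [this]
    have := F.continuous
    have h2 := PiLp.continuous_toLp 2 (fun _ : Fin 3 => ℝ)
    fun_prop
  · obtain ⟨C0, hC0, h0⟩ := F.decay 0 0
    obtain ⟨C2, hC2, h2⟩ := F.decay 2 0
    refine ⟨((2 * Real.pi) ^ 3)⁻¹ * (C0 + (2 * Real.pi) ^ 2 * C2), fun ξ => ?_⟩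
    have h0 := h0 (WithLp.toLp 2 ((2 * Real.pi)⁻¹ • ξ))
    have h2 := h2 (WithLp.toLp 2 ((2 * Real.pi)⁻¹ • ξ))
    rw [norm_iteratedFDeriv_zero] at h0 h2
    have hn : ‖ξ‖ ≤ (2 * Real.pi) * ‖WithLp.toLp 2 ((2 * Real.pi)⁻¹ • ξ)‖ := by
      have hp : 0 < 2 * Real.pi := by positivity
      rw [WithLp.toLp_smul, norm_smul, Real.norm_of_nonneg (by positivity), ← mul_assoc,
        mul_inv_cancel₀ hp.ne', one_mul]
      refine (norm_le_euclid ξ).trans (le_of_eq ?_)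
      simp [EuclideanSpace.norm_eq, Fin.sum_univ_three]
    rw [key, norm_smul, Real.norm_of_nonneg (by positivity)]
    set N := ‖F (WithLp.toLp 2 ((2 * Real.pi)⁻¹ • ξ))‖
    have hN : 0 ≤ N := norm_nonneg _
    have hsq := pow_le_pow_left₀ (norm_nonneg _) hn 2
    have : (1 + ‖ξ‖ ^ 2) * N ≤ C0 + (2 * Real.pi) ^ 2 * C2 := by
      calc (1 + ‖ξ‖ ^ 2) * N ≤ (1 + ((2 * Real.pi) *
              ‖WithLp.toLp 2 ((2 * Real.pi)⁻¹ • ξ)‖) ^ 2) * N := by gcongr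
        _ = ‖WithLp.toLp 2 ((2 * Real.pi)⁻¹ • ξ)‖ ^ 0 * N + (2 * Real.pi) ^ 2 *
              (‖WithLp.toLp 2 ((2 * Real.pi)⁻¹ • ξ)‖ ^ 2 * N) := by ring
        _ ≤ _ := by gcongr
    calc _ = ((2 * Real.pi) ^ 3)⁻¹ * ((1 + ‖ξ‖ ^ 2) * N) := by ring
      _ ≤ _ := by gcongr

lemma schwartz_decay (φ : SchwartzMap (Fin 3 → ℝ) ℂ) :
    ∃ C, ∀ x, ‖x‖ * (1 + ‖x‖ ^ 2) * ‖φ x‖ ≤ C := by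
  obtain ⟨C1, -, h1⟩ := φ.decay 1 0
  obtain ⟨C3, -, h3⟩ := φ.decay 3 0
  refine ⟨C1 + C3, fun x => ?_⟩
  have h1 := h1 x
  have h3 := h3 x
  rw [norm_iteratedFDeriv_zero] at h1 h3
  linarith

/-! ### Parseval identity for a fixed parameter -/

/-- Parseval: an integrable `G` paired with `invFT φ` is the inverse transform of `G` paired
with `φ`. -/
lemma pairing_invFT {G : (Fin 3 → ℝ) → ℂ} (hG : Integrable G) (φ : SchwartzMap (Fin 3 → ℝ) ℂ) :
    ∫ ξ, G ξ * invFT φ ξ = ∫ v, ((((2 * Real.pi) ^ 3)⁻¹ : ℝ) : ℂ) * (∫ ξ, G ξ *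
      Complex.exp (Complex.I * ((ξ 0 * v 0 + ξ 1 * v 1 + ξ 2 * v 2 : ℝ) : ℂ))) * φ v := by
  have hI : Integrable (Function.uncurry fun ξ v : Fin 3 → ℝ =>
      Complex.exp (Complex.I * ((ξ 0 * v 0 + ξ 1 * v 1 + ξ 2 * v 2 : ℝ) : ℂ)) * (G ξ * φ v))
      (volume.prod volume) := by
    refine (hG.mul_prod φ.integrable).bdd_mul (c := 1) ?_ ?_
    · exact (by fun_prop : Continuous fun p : (Fin 3 → ℝ) × (Fin 3 → ℝ) =>
        Complex.exp (Complex.I * ((p.1 0 * p.2 0 + p.1 1 * p.2 1 + p.1 2 * p.2 2 : ℝ) : ℂ))).aestronglyMeasurable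
    · refine Filter.Eventually.of_forall fun p => ?_
      rw [mul_comm Complex.I, Complex.norm_exp_ofReal_mul_I]
  have hs := integral_integral_swap hI
  have e1 : ∀ ξ, G ξ * invFT φ ξ = ((((2 * Real.pi) ^ 3)⁻¹ : ℝ) : ℂ) * ∫ v,
      Complex.exp (Complex.I * ((ξ 0 * v 0 + ξ 1 * v 1 + ξ 2 * v 2 : ℝ) : ℂ)) * (G ξ * φ v) := by
    intro ξ
    rw [invFT, Complex.real_smul, mul_left_comm, ← integral_const_mul]
    congr 2; ext v; ring
  have e2 : ∀ v, ((((2 * Real.pi) ^ 3)⁻¹ : ℝ) : ℂ) * (∫ ξ, G ξ *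
      Complex.exp (Complex.I * ((ξ 0 * v 0 + ξ 1 * v 1 + ξ 2 * v 2 : ℝ) : ℂ))) * φ v =
      ((((2 * Real.pi) ^ 3)⁻¹ : ℝ) : ℂ) * ∫ ξ : Fin 3 → ℝ,
      Complex.exp (Complex.I * ((ξ 0 * v 0 + ξ 1 * v 1 + ξ 2 * v 2 : ℝ) : ℂ)) * (G ξ * φ v) := by
    intro v
    rw [mul_assoc, ← integral_mul_const]
    congr 2; ext ξ; ring
  simp_rw [e1, e2]
  rw [integral_const_mul, integral_const_mul, hs]

lemma integrable_poly_gauss {t : ℝ} (ht : 0 < t) :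
    Integrable fun ξ : Fin 3 → ℝ => ((ξ 0 ^ 2 * ξ 1 * ξ 2 *
        Real.exp (-(t * (ξ 0 ^ 2 + ξ 1 ^ 2 + ξ 2 ^ 2))) : ℝ) : ℂ) := by
  have h := Integrable.fintype_prod (ι := Fin 3) (E := ℝ) (𝕜 := ℂ)
    (μ := fun _ => volume)
    (f := fun i (ξ : ℝ) => (ξ : ℂ) ^ (![2, 1, 1] i : ℕ) *
      (Complex.exp (Complex.I * (0 : ℝ) * ξ) * Complex.exp (-(t : ℂ) * ξ ^ 2)))
    (fun i => integrable_moment _ ht 0)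
  refine h.congr (Filter.Eventually.of_forall fun ξ => ?_)
  simp only [Fin.prod_univ_three, Matrix.cons_val_zero, Matrix.cons_val_one, Matrix.cons_val,
    pow_one, Complex.ofReal_zero, mul_zero, zero_mul, Complex.exp_zero, one_mul]
  push_cast
  have e1 : -((t:ℂ) * ((ξ 0:ℂ) ^ 2 + (ξ 1:ℂ) ^ 2 + (ξ 2:ℂ) ^ 2)) =
      -(t:ℂ) * ξ 0 ^ 2 + -(t:ℂ) * ξ 1 ^ 2 + -(t:ℂ) * ξ 2 ^ 2 := by ring
  rw [e1]
  simp only [Complex.exp_add]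
  ring

/-- Bookkeeping of constants: `moment_three`, with the factor `t²` of the frequency side and the
normalisation `(2π)⁻³`, written in the form of the two Gamma integrands with exponents `5/2` and
`3/2`. Here `A` stands for `x₂x₃` and `r` for `|x|²`. -/
lemma heat_constants {t : ℝ} (ht : 0 < t) (A r x0 : ℝ) :
    ((2 * Real.pi) ^ 3)⁻¹ * (t ^ ((3 : ℝ) - 1) * (√(Real.pi / t) ^ 3 * (A / (4 * t ^ 2)) *
      (x0 ^ 2 / (4 * t ^ 2) - 1 / (2 * t)) * Real.exp (-(r / (4 * t))))) =
    1 / (128 * (Real.pi * √Real.pi)) * (t ^ (-(5 / 2 : ℝ) - 1) * Real.exp (-(r / 4 / t)) *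
      (x0 ^ 2 * A)) -
    1 / (64 * (Real.pi * √Real.pi)) * (t ^ (-(3 / 2 : ℝ) - 1) * Real.exp (-(r / 4 / t)) * A) := by
  have hT : 0 < √t := Real.sqrt_pos.2 ht
  have hP : 0 < √Real.pi := Real.sqrt_pos.2 Real.pi_pos
  have e0 : t ^ ((3 : ℝ) - 1) = t ^ 2 := by
    rw [← Real.rpow_natCast]; norm_num
  have e1 : t ^ (-(5 / 2 : ℝ) - 1) = (√t ^ 7)⁻¹ := by
    rw [Real.sqrt_eq_rpow, ← Real.rpow_natCast, ← Real.rpow_mul ht.le, ← Real.rpow_neg ht.le]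
    norm_num
  have e2 : t ^ (-(3 / 2 : ℝ) - 1) = (√t ^ 5)⁻¹ := by
    rw [Real.sqrt_eq_rpow, ← Real.rpow_natCast, ← Real.rpow_mul ht.le, ← Real.rpow_neg ht.le]
    norm_num
  rw [e0, e1, e2, Real.sqrt_div Real.pi_pos.le, div_div r 4 t]
  have h1 : t = √t ^ 2 := (Real.sq_sqrt ht.le).symm
  have h2 : Real.pi = √Real.pi ^ 2 := (Real.sq_sqrt Real.pi_pos.le).symm
  generalize Real.exp (-(r / (4 * t))) = E
  set T := √t
  set P := √Real.pi
  rw [h1, h2]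
  field_simp
  ring

/-- A polynomially bounded function times a bounded factor is integrable against `φ`. -/
lemma integrable_damped_mul (φ : SchwartzMap (Fin 3 → ℝ) ℂ) (p : (Fin 3 → ℝ) → ℝ)
    (hp : Continuous p) (k : ℕ) (hpk : ∀ x, |p x| ≤ ‖x‖ ^ k) (E : (Fin 3 → ℝ) → ℝ)
    (hE : Continuous E) (hE1 : ∀ x, |E x| ≤ 1) (c : ℝ) :
    Integrable fun x => ((c * E x : ℝ) : ℂ) * ((p x : ℂ) * φ x) := by
  refine ((φ.integrable_pow_mul volume k).const_mul |c|).mono'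
    (by have := φ.continuous; exact (by fun_prop : Continuous _).aestronglyMeasurable)
    (Filter.Eventually.of_forall fun x => ?_)
  simp only [norm_mul, Complex.norm_real, Real.norm_eq_abs]
  calc |c| * |E x| * (|p x| * ‖φ x‖) ≤ |c| * 1 * (‖x‖ ^ k * ‖φ x‖) := by
        gcongr
        · exact hE1 x
        · exact hpk x
    _ = _ := by ring

lemma abs_coord_le (x : Fin 3 → ℝ) (i : Fin 3) : |x i| ≤ ‖x‖ := norm_le_pi_norm x i

lemma abs_quadratic_le (x : Fin 3 → ℝ) : |x 1 * x 2| ≤ ‖x‖ ^ 2 := by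
  rw [abs_mul, pow_two]
  exact mul_le_mul (abs_coord_le x 1) (abs_coord_le x 2) (abs_nonneg _) (norm_nonneg _)

lemma abs_quartic_le (x : Fin 3 → ℝ) : |x 0 ^ 2 * (x 1 * x 2)| ≤ ‖x‖ ^ 4 := by
  rw [abs_mul, abs_pow]
  calc |x 0| ^ 2 * |x 1 * x 2| ≤ ‖x‖ ^ 2 * ‖x‖ ^ 2 := by
        gcongr
        · exact abs_coord_le x 0
        · exact abs_quadratic_le x
    _ = _ := by ring

/-- The theorem with `1/|ξ|⁶` replaced by its Gaussian component `t² exp (-t|ξ|²)`. -/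
lemma heat_pairing (φ : SchwartzMap (Fin 3 → ℝ) ℂ) {t : ℝ} (ht : 0 < t) :
    ∫ ξ : Fin 3 → ℝ, ((t ^ ((3 : ℝ) - 1) *
        Real.exp (-((ξ 0 ^ 2 + ξ 1 ^ 2 + ξ 2 ^ 2) * t)) : ℝ) : ℂ) *
        (((ξ 0 ^ 2 * (ξ 1 * ξ 2) : ℝ) : ℂ) * invFT φ ξ) =
      ((1 / (128 * (Real.pi * √Real.pi)) : ℝ) : ℂ) * (∫ x : Fin 3 → ℝ,
        ((t ^ (-(5 / 2 : ℝ) - 1) *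
          Real.exp (-((x 0 ^ 2 + x 1 ^ 2 + x 2 ^ 2) / 4 / t)) : ℝ) : ℂ) *
        (((x 0 ^ 2 * (x 1 * x 2) : ℝ) : ℂ) * φ x)) -
      ((1 / (64 * (Real.pi * √Real.pi)) : ℝ) : ℂ) * (∫ x : Fin 3 → ℝ,
        ((t ^ (-(3 / 2 : ℝ) - 1) *
          Real.exp (-((x 0 ^ 2 + x 1 ^ 2 + x 2 ^ 2) / 4 / t)) : ℝ) : ℂ) *
        (((x 1 * x 2 : ℝ) : ℂ) * φ x)) := by
  have hE : Continuous fun x : Fin 3 → ℝ => Real.exp (-((x 0 ^ 2 + x 1 ^ 2 + x 2 ^ 2) / 4 / t)) := by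
    fun_prop
  have hE1 : ∀ x : Fin 3 → ℝ, |Real.exp (-((x 0 ^ 2 + x 1 ^ 2 + x 2 ^ 2) / 4 / t))| ≤ 1 := by
    intro x
    rw [Real.abs_exp, Real.exp_le_one_iff, neg_nonpos]
    positivity
  have i2 := integrable_damped_mul φ (fun x => x 0 ^ 2 * (x 1 * x 2)) (by fun_prop) 4
    abs_quartic_le _ hE hE1 (t ^ (-(5 / 2 : ℝ) - 1))
  have i3 := integrable_damped_mul φ (fun x => x 1 * x 2) (by fun_prop) 2
    abs_quadratic_le _ hE hE1 (t ^ (-(3 / 2 : ℝ) - 1))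
  have hG := (integrable_poly_gauss ht).const_mul ((t ^ ((3 : ℝ) - 1) : ℝ) : ℂ)
  have hp := pairing_invFT hG φ
  simp_rw [mul_assoc (((t ^ ((3 : ℝ) - 1) : ℝ) : ℂ)), integral_const_mul, moment_three ht] at hp
  rw [← integral_const_mul, ← integral_const_mul, ← integral_sub (i2.const_mul _) (i3.const_mul _)]
  rw [← integral_const_mul] at hp
  calc _ = _ := ?_
    _ = _ := hp
    _ = _ := ?_
  · congr 1; ext ξ
    rw [mul_comm (ξ 0 ^ 2 + ξ 1 ^ 2 + ξ 2 ^ 2) t]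
    push_cast
    ring
  · congr 1; ext v
    rw [← Complex.ofReal_mul, ← Complex.ofReal_mul, heat_constants ht]
    push_cast
    ring

/-! ### Values of the Gamma integrals -/

lemma gamma_three_halves : Real.Gamma (3 / 2) = √Real.pi / 2 := by
  have := Real.Gamma_nat_add_half 1
  norm_num [Nat.doubleFactorial] at this
  exact this

lemma gamma_five_halves : Real.Gamma (5 / 2) = 3 * √Real.pi / 4 := by
  have := Real.Gamma_nat_add_half 2
  norm_num [Nat.doubleFactorial] at this
  exact this

lemma rpow_half_sq {R : ℝ} (hR : 0 ≤ R) (n : ℕ) : (R ^ 2) ^ ((n : ℝ) / 2) = R ^ n := by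
  rw [← Real.rpow_natCast, ← Real.rpow_mul hR, ← Real.rpow_natCast]
  congr 1; push_cast; ring

lemma sq_sum_pos {x : Fin 3 → ℝ} (hx : x ≠ 0) : 0 < x 0 ^ 2 + x 1 ^ 2 + x 2 ^ 2 := by
  have := (norm_pos_iff.2 hx).trans_le (norm_le_euclid x)
  exact Real.sqrt_pos.1 this

/-- The factor `(1/c)^a` of `gamma_inv` for `c = r/4`, `a = n/2`. -/
lemma gamma_weight {r : ℝ} (hr : 0 < r) (n : ℕ) :
    (1 / (r / 4)) ^ ((n : ℝ) / 2) = 2 ^ n / √r ^ n := by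
  have hs : 0 < √r := Real.sqrt_pos.2 hr
  have : 1 / (r / 4) = (2 / √r) ^ 2 := by
    rw [div_pow, Real.sq_sqrt hr.le]; field_simp; norm_num
  rw [this, rpow_half_sq (by positivity), div_pow]

/-! ### The distributional identity -/

/-- As a tempered distribution, the inverse Fourier transform of
`ξ₁²ξ₂ξ₃/|ξ|⁶` equals `yz(2x²−y²−z²)/(32π(x²+y²+z²)^{5/2})`. -/
theorem invFT_xi1_sq_xi2_xi3 :
    ∀ φ : SchwartzMap (Fin 3 → ℝ) ℂ,
      ∫ ξ : Fin 3 → ℝ,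
          (((ξ 0) ^ 2 * ξ 1 * ξ 2 / ((ξ 0) ^ 2 + (ξ 1) ^ 2 + (ξ 2) ^ 2) ^ 3 : ℝ) : ℂ) * invFT (fun v => φ v) ξ
        = ∫ x : Fin 3 → ℝ,
          ((x 1 * x 2 * (2 * (x 0) ^ 2 - (x 1) ^ 2 - (x 2) ^ 2) /
            (32 * Real.pi * ((x 0) ^ 2 + (x 1) ^ 2 + (x 2) ^ 2) ^ ((5 : ℝ) / 2)) : ℝ) : ℂ) * φ x := by
  intro φ
  obtain ⟨hψ, Cψ, hCψ⟩ := invFT_regular φ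
  obtain ⟨C, hC⟩ := schwartz_decay φ
  have hφ := φ.continuous
  have hR : ∀ x : Fin 3 → ℝ, √(x 0 ^ 2 + x 1 ^ 2 + x 2 ^ 2) ^ 2 = x 0 ^ 2 + x 1 ^ 2 + x 2 ^ 2 :=
    fun x => Real.sq_sqrt (by positivity)
  -- Frequency side: `∫₀^∞ t² exp (-t|ξ|²) dt = 2/|ξ|⁶`.
  obtain ⟨-, -, f1⟩ := fubini_weight
    (w := fun ξ t => t ^ ((3 : ℝ) - 1) * Real.exp (-((ξ 0 ^ 2 + ξ 1 ^ 2 + ξ 2 ^ 2) * t)))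
    (W := fun ξ => 2 / (ξ 0 ^ 2 + ξ 1 ^ 2 + ξ 2 ^ 2) ^ 3)
    (g := fun ξ => ((ξ 0 ^ 2 * (ξ 1 * ξ 2) : ℝ) : ℂ) * invFT φ ξ)
    (by unfold Function.uncurry; fun_prop) (fun ξ t ht => by positivity)
    (fun ξ hξ => by
      have := integrableOn_rpow_mul_exp_neg_mul_rpow (p := 1) (s := (3 : ℝ) - 1) (by norm_num)
        one_pos (sq_sum_pos hξ)
      simpa only [Real.rpow_one, neg_mul] using this)
    (fun ξ hξ => by
      rw [Real.integral_rpow_mul_exp_neg_mul_Ioi (by norm_num) (sq_sum_pos hξ)]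
      have : Real.Gamma 3 = 2 := by
        norm_num [Nat.factorial]
      have e3 : ∀ y : ℝ, y ^ (3 : ℝ) = y ^ 3 := fun y => by exact_mod_cast Real.rpow_natCast y 3
      rw [this, e3]
      field_simp)
    (by fun_prop) (2 * Cψ) (fun x hx => by
      have hN := norm_pos_iff.2 hx
      have hNR := norm_le_euclid x
      have hpos := sq_sum_pos hx
      have hle : ‖x‖ ^ 2 ≤ x 0 ^ 2 + x 1 ^ 2 + x 2 ^ 2 := by
        rw [← hR x]; gcongr
      have h := hCψ x
      rw [norm_mul, Complex.norm_real, Real.norm_eq_abs]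
      calc _ ≤ 2 / (‖x‖ ^ 2) ^ 3 * (‖x‖ ^ 4 * (Cψ / (1 + ‖x‖ ^ 2))) := by
            gcongr
            · exact abs_quartic_le x
            · rw [le_div_iff₀ (by positivity)]; linarith
        _ = _ := by field_simp)
  -- Space side, exponent `5/2`: the constant is `2⁵ Γ(5/2) = 24√π`.
  obtain ⟨j2, k2, f2⟩ := fubini_weight
    (w := fun x t => t ^ (-(5 / 2 : ℝ) - 1) * Real.exp (-((x 0 ^ 2 + x 1 ^ 2 + x 2 ^ 2) / 4 / t)))
    (W := fun x => 24 * √Real.pi / √(x 0 ^ 2 + x 1 ^ 2 + x 2 ^ 2) ^ 5)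
    (g := fun x => ((x 0 ^ 2 * (x 1 * x 2) : ℝ) : ℂ) * φ x)
    (by unfold Function.uncurry; fun_prop) (fun ξ t ht => by positivity)
    (fun x hx => (gamma_inv (by norm_num) (by have := sq_sum_pos hx; positivity)).1)
    (fun x hx => by
      rw [(gamma_inv (by norm_num) (by have := sq_sum_pos hx; positivity)).2, gamma_five_halves]
      have := gamma_weight (sq_sum_pos hx) 5
      push_cast at this
      rw [this]
      ring)
    (by fun_prop) (24 * √Real.pi * C) (fun x hx => by
      have hN := norm_pos_iff.2 hx
      have hNR := norm_le_euclid x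
      have h := hC x
      rw [norm_mul, Complex.norm_real, Real.norm_eq_abs]
      calc _ ≤ 24 * √Real.pi / ‖x‖ ^ 5 * (‖x‖ ^ 4 * (C / (‖x‖ * (1 + ‖x‖ ^ 2)))) := by
            gcongr
            · exact abs_quartic_le x
            · rw [le_div_iff₀ (by positivity)]; linarith
        _ = _ := by field_simp)
  -- Space side, exponent `3/2`: the constant is `2³ Γ(3/2) = 4√π`.
  obtain ⟨j3, k3, f3⟩ := fubini_weight
    (w := fun x t => t ^ (-(3 / 2 : ℝ) - 1) * Real.exp (-((x 0 ^ 2 + x 1 ^ 2 + x 2 ^ 2) / 4 / t)))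
    (W := fun x => 4 * √Real.pi / √(x 0 ^ 2 + x 1 ^ 2 + x 2 ^ 2) ^ 3)
    (g := fun x => ((x 1 * x 2 : ℝ) : ℂ) * φ x)
    (by unfold Function.uncurry; fun_prop) (fun ξ t ht => by positivity)
    (fun x hx => (gamma_inv (by norm_num) (by have := sq_sum_pos hx; positivity)).1)
    (fun x hx => by
      rw [(gamma_inv (by norm_num) (by have := sq_sum_pos hx; positivity)).2, gamma_three_halves]
      have := gamma_weight (sq_sum_pos hx) 3
      push_cast at this
      rw [this]
      ring)
    (by fun_prop) (4 * √Real.pi * C) (fun x hx => by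
      have hN := norm_pos_iff.2 hx
      have hNR := norm_le_euclid x
      have h := hC x
      rw [norm_mul, Complex.norm_real, Real.norm_eq_abs]
      calc _ ≤ 4 * √Real.pi / ‖x‖ ^ 3 * (‖x‖ ^ 2 * (C / (‖x‖ * (1 + ‖x‖ ^ 2)))) := by
            gcongr
            · exact abs_quadratic_le x
            · rw [le_div_iff₀ (by positivity)]; linarith
        _ = _ := by field_simp)
  have hmain := f1.symm.trans (setIntegral_congr_fun measurableSet_Ioi
    fun t ht => heat_pairing φ (Set.mem_Ioi.1 ht))
  rw [integral_sub (j2.const_mul _) (j3.const_mul _), integral_const_mul, integral_const_mul,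
    f2, f3, ← integral_const_mul, ← integral_const_mul,
    ← integral_sub (k2.const_mul _) (k3.const_mul _)] at hmain
  -- The factor `1/2` compensates `∫₀^∞ t² exp (-t|ξ|²) dt = 2/|ξ|⁶`.
  have h2 := congrArg ((1 / 2 : ℂ) * ·) hmain
  refine Eq.trans ?_ (h2.trans ?_)
  · rw [← integral_const_mul]
    congr 1; ext ξ
    push_cast
    ring
  · rw [← integral_const_mul]
    refine integral_congr_ae ?_
    filter_upwards [compl_mem_ae_iff.mpr (measure_singleton (0 : Fin 3 → ℝ))] with x hx
    have hpos := sq_sum_pos hx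
    have h5 := rpow_half_sq (Real.sqrt_nonneg (x 0 ^ 2 + x 1 ^ 2 + x 2 ^ 2)) 5
    rw [hR x] at h5
    push_cast at h5
    rw [h5]
    have key : (1 / 2 : ℝ) * (1 / (128 * (Real.pi * √Real.pi)) *
          (24 * √Real.pi / √(x 0 ^ 2 + x 1 ^ 2 + x 2 ^ 2) ^ 5 * (x 0 ^ 2 * (x 1 * x 2))) -
        1 / (64 * (Real.pi * √Real.pi)) *
          (4 * √Real.pi / √(x 0 ^ 2 + x 1 ^ 2 + x 2 ^ 2) ^ 3 * (x 1 * x 2))) =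
        x 1 * x 2 * (2 * (x 0) ^ 2 - (x 1) ^ 2 - (x 2) ^ 2) /
            (32 * Real.pi * √(x 0 ^ 2 + x 1 ^ 2 + x 2 ^ 2) ^ 5) := by
      have hRp := Real.sqrt_pos.2 hpos
      have hP : 0 < √Real.pi := Real.sqrt_pos.2 Real.pi_pos
      have hp := Real.pi_pos
      have e := hR x
      set R := √(x 0 ^ 2 + x 1 ^ 2 + x 2 ^ 2)
      have e' : x 2 ^ 2 = R ^ 2 - x 0 ^ 2 - x 1 ^ 2 := by linarith
      rw [e']
      field_simp
      ring
    rw [← key]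
    push_cast
    ring
end
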